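/- arXiv:2107.08281 — 5 statements merged into one kernel-verified Lean document; each statement's English description precedes it below -/
import Mathlib

section
/- Under assumptions (A1)–(A3) with τμ − ξ > 0 and H∘B convex, the C-FISTA iterates satisfy, for every k ≥ 0, F(x^{k+1}) − F(x*) + ((τμ−ξ)/2)‖z^{k+1} − x*‖² ≤ (1 − √((τμ−ξ)(rL−ξ))/(rL)) · ( F(x^k) − F(x*) + ((τμ−ξ)/2)‖z^k − x*‖² ). -/
open scoped RealInnerProductSpace

lemma cf_one_dim (φ φ' : ℝ → ℝ) (c : ℝ) (h : ∀ t, HasDerivAt φ (φ' t) t)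
    (hb : ∀ t, 0 < t → t < 1 → φ' t ≤ c * t) : φ 1 ≤ φ 0 + c / 2 := by
  have hd : ∀ t, HasDerivAt (fun t => φ t - c / 2 * t ^ 2) (φ' t - c * t) t := by
    intro t
    have h2 : HasDerivAt (fun t : ℝ => c / 2 * t ^ 2) (c * t) t := by
      have h3 := (hasDerivAt_pow 2 t).const_mul (c / 2)
      have e : c / 2 * (((2 : ℕ) : ℝ) * t ^ (2 - 1)) = c * t := by
        norm_num
        ring
      rw [e] at h3
      exact h3
    exact (h t).sub h2
  have ha : AntitoneOn (fun t => φ t - c / 2 * t ^ 2) (Set.Icc (0:ℝ) 1) := by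
    apply antitoneOn_of_deriv_nonpos (convex_Icc 0 1)
    · exact fun t _ => (hd t).continuousAt.continuousWithinAt
    · exact fun t _ => (hd t).differentiableAt.differentiableWithinAt
    · intro t ht
      rw [interior_Icc] at ht
      rw [(hd t).deriv]
      have := hb t ht.1 ht.2
      linarith
  have := ha (Set.left_mem_Icc.2 zero_le_one) (Set.right_mem_Icc.2 zero_le_one) zero_le_one
  simp at this
  linarith

lemma cf_small (A C : ℝ) (hC : 0 ≤ C) (h : ∀ t, 0 < t → t ≤ 1 → 0 ≤ t * A + t ^ 2 * C) :
    0 ≤ A := by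
  by_contra hA
  push Not at hA
  have hp : 0 < -A / (2 * (C + 1)) := by apply div_pos <;> linarith
  set t := min 1 (-A / (2 * (C + 1))) with ht
  have h0 : 0 < t := lt_min one_pos hp
  have h1 := h t h0 (min_le_left _ _)
  have h2 : t ≤ -A / (2 * (C + 1)) := min_le_right _ _
  rw [le_div_iff₀ (by linarith)] at h2
  have h3 : 0 ≤ t * (A + t * C) := by linarith [h1, (by ring : t * (A + t * C) = t * A + t ^ 2 * C)]
  have h4 := nonneg_of_mul_nonneg_right h3 h0
  nlinarith

lemma cf_fderiv_line {E G : Type*} [NormedAddCommGroup E] [NormedSpace ℝ E]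
    [NormedAddCommGroup G] [NormedSpace ℝ G] (f : E → G) (hf : Differentiable ℝ f) (u d : E) (t : ℝ) :
    HasDerivAt (fun s : ℝ => f (u + s • d)) (fderiv ℝ f (u + t • d) d) t := by
  have h1 : HasDerivAt (fun s : ℝ => u + s • d) d t := by
    simpa using ((hasDerivAt_id t).smul_const d).const_add u
  exact (hf (u + t • d)).hasFDerivAt.comp_hasDerivAt t h1

lemma cf_grad {E : Type*} [NormedAddCommGroup E] [InnerProductSpace ℝ E] [CompleteSpace E]
    (f : E → ℝ) (u d : E) : ⟪gradient f u, d⟫ = fderiv ℝ f u d := by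
  simp [gradient]

lemma cf_descent {E : Type*} [NormedAddCommGroup E] [InnerProductSpace ℝ E] [CompleteSpace E]
    (H : E → ℝ) (hH : Differentiable ℝ H) (L : ℝ)
    (hlip : ∀ u v, ‖gradient H u - gradient H v‖ ≤ L * ‖u - v‖) (u v : E) :
    H v ≤ H u + ⟪gradient H u, v - u⟫ + L / 2 * ‖v - u‖ ^ 2 := by
  set d := v - u with hd
  have := cf_one_dim (fun t => H (u + t • d) - t * ⟪gradient H u, d⟫)
    (fun t => fderiv ℝ H (u + t • d) d - 1 * ⟪gradient H u, d⟫) (L * ‖d‖ ^ 2)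
    (fun t => (cf_fderiv_line H hH u d t).sub ((hasDerivAt_id t).mul_const _)) (by
      intro t h0 h1
      rw [← cf_grad, one_mul, ← inner_sub_left]
      refine (real_inner_le_norm _ _).trans ?_
      have h2 := hlip (u + t • d) u
      rw [add_sub_cancel_left, norm_smul, Real.norm_of_nonneg h0.le] at h2
      calc _ ≤ (L * (t * ‖d‖)) * ‖d‖ := by gcongr
        _ = _ := by ring)
  simp only [one_smul, zero_smul, add_zero, one_mul, zero_mul, sub_zero] at this
  rw [hd, add_sub_cancel, ← hd] at this
  linarith

lemma cf_taylor {E G : Type*} [NormedAddCommGroup E] [InnerProductSpace ℝ E]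
    [NormedAddCommGroup G] [InnerProductSpace ℝ G]
    (B : E → G) (hB : Differentiable ℝ B) (S : Submodule ℝ E) (p : G) (ξ : ℝ) (u v : E)
    (hu : u ∈ S) (hv : v ∈ S)
    (h : ∀ w ∈ S, ⟪p, (fderiv ℝ B w - fderiv ℝ B u) (w - u)⟫ ≤ ξ * ‖w - u‖ ^ 2) :
    ⟪p, B v - B u⟫ ≤ ⟪p, fderiv ℝ B u (v - u)⟫ + ξ / 2 * ‖v - u‖ ^ 2 := by
  set d := v - u with hd
  have hdS : d ∈ S := S.sub_mem hv hu
  have := cf_one_dim (fun t => ⟪p, B (u + t • d)⟫ - t * ⟪p, fderiv ℝ B u d⟫)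
    (fun t => ⟪p, fderiv ℝ B (u + t • d) d⟫ - 1 * ⟪p, fderiv ℝ B u d⟫) (ξ * ‖d‖ ^ 2)
    (fun t => by
      refine HasDerivAt.sub ?_ ((hasDerivAt_id t).mul_const _)
      have := (hasDerivAt_const t p).inner ℝ (cf_fderiv_line B hB u d t)
      simpa using this) (by
      intro t h0 h1
      have h2 := h (u + t • d) (S.add_mem hu (S.smul_mem t hdS))
      rw [add_sub_cancel_left, norm_smul, Real.norm_of_nonneg h0.le, map_smul, inner_smul_right,
        sub_apply, inner_sub_right] at h2
      rw [one_mul]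
      have h3 : t * (⟪p, fderiv ℝ B (u + t • d) d⟫ - ⟪p, fderiv ℝ B u d⟫) ≤ t * (ξ * ‖d‖ ^ 2 * t) := by
        linarith [h2, (by ring : t * (ξ * ‖d‖ ^ 2 * t) = ξ * (t * ‖d‖) ^ 2)]
      exact le_of_mul_le_mul_left h3 h0)
  simp only [one_smul, zero_smul, add_zero, one_mul, zero_mul, sub_zero] at this
  rw [hd, add_sub_cancel, ← hd] at this
  rw [inner_sub_right]
  linarith

lemma cf_prox {E : Type*} [NormedAddCommGroup E] [InnerProductSpace ℝ E]
    (X : Set E) (hX : Convex ℝ X) (R : E → ℝ) (hR : ConvexOn ℝ Set.univ R) (q y x w : E) (M : ℝ)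
    (hM : 0 ≤ M) (hx : x ∈ X) (hw : w ∈ X)
    (hmin : ∀ w ∈ X, ⟪q, x - y⟫ + M / 2 * ‖x - y‖ ^ 2 + R x ≤ ⟪q, w - y⟫ + M / 2 * ‖w - y‖ ^ 2 + R w) :
    0 ≤ ⟪q, w - x⟫ + M * ⟪x - y, w - x⟫ + (R w - R x) := by
  apply cf_small _ (M / 2 * ‖w - x‖ ^ 2) (by positivity)
  intro t h0 h1
  have hm : (1 - t) • x + t • w ∈ X := hX hx hw (by linarith) h0.le (by ring)
  have h2 := hmin _ hm
  have h3 := hR.2 (Set.mem_univ x) (Set.mem_univ w) (by linarith : 0 ≤ 1 - t) h0.le (by ring)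
  have h4 : (1 - t) • x + t • w - y = (x - y) + t • (w - x) := by module
  rw [h4, norm_add_sq_real, inner_add_right, inner_smul_right, inner_smul_right, norm_smul,
    Real.norm_of_nonneg h0.le] at h2
  simp only [smul_eq_mul] at h3
  nlinarith

lemma cf_combine {E : Type*} [NormedAddCommGroup E] [InnerProductSpace ℝ E]
    (xk z y xn zn xs : E) (θ α σ M ξ Fn Fk Fs : ℝ) (h0 : 0 ≤ θ) (h1 : θ ≤ 1) (hσ : 0 < σ)
    (hα1 : σ * α = M * θ) (hα2 : σ * α ^ 2 = M - ξ)
    (hy : y = (1 / (1 + θ)) • xk + (θ / (1 + θ)) • z)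
    (hz : zn = (1 - θ) • z + θ • y + α • (xn - y))
    (hk : Fn ≤ Fk + M * ⟪xn - y, xk - y⟫ - (M - ξ) / 2 * ‖xn - y‖ ^ 2)
    (hs : Fn ≤ Fs + M * ⟪xn - y, xs - y⟫ - (M - ξ) / 2 * ‖xn - y‖ ^ 2 - σ / 2 * ‖xs - y‖ ^ 2) :
    Fn - Fs + σ / 2 * ‖zn - xs‖ ^ 2 ≤ (1 - θ) * (Fk - Fs + σ / 2 * ‖z - xs‖ ^ 2) := by
  have hpos : (1 + θ) ≠ 0 := by positivity
  have hxk : xk - y = θ • (y - xs) - θ • (z - xs) := by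
    have : (1 + θ) • y = xk + θ • z := by
      rw [hy, smul_add, smul_smul, smul_smul, mul_div_cancel₀ _ hpos, mul_div_cancel₀ _ hpos, one_smul]
    have h : xk = (1 + θ) • y - θ • z := by rw [this]; abel
    rw [h]; module
  have hzn : zn - xs = ((1 - θ) • (z - xs) + θ • (y - xs)) + α • (xn - y) := by rw [hz]; module
  have hxs : xs - y = -(y - xs) := by abel
  rw [hxk] at hk
  rw [hxs, inner_neg_right, norm_neg] at hs
  rw [hzn]
  generalize xn - y = g at *
  generalize y - xs = a at *
  generalize z - xs = b at *
  have e1 : ‖(1 - θ) • b + θ • a + α • g‖ ^ 2 = ‖(1 - θ) • b + θ • a‖ ^ 2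
      + 2 * α * ((1 - θ) * ⟪g, b⟫ + θ * ⟪g, a⟫) + α ^ 2 * ‖g‖ ^ 2 := by
    rw [norm_add_sq_real, inner_smul_right, real_inner_comm, inner_add_right, inner_smul_right,
      inner_smul_right, norm_smul, mul_pow, Real.norm_eq_abs, sq_abs]
    ring
  have e2 : ‖(1 - θ) • b + θ • a‖ ^ 2 = (1 - θ) * ‖b‖ ^ 2 + θ * ‖a‖ ^ 2
      - θ * (1 - θ) * ‖b - a‖ ^ 2 := by
    rw [norm_add_sq_real, norm_sub_sq_real, inner_smul_right, real_inner_smul_left, norm_smul,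
      norm_smul, mul_pow, mul_pow, Real.norm_eq_abs, Real.norm_eq_abs, sq_abs, sq_abs]
    ring
  rw [inner_sub_right, inner_smul_right, inner_smul_right] at hk
  rw [e1, e2]
  have n1 : 0 ≤ σ / 2 * (θ * (1 - θ) * ‖b - a‖ ^ 2) := by
    have : 0 ≤ 1 - θ := by linarith
    positivity
  have k1 := mul_le_mul_of_nonneg_left hk (by linarith : 0 ≤ 1 - θ)
  have k2 := mul_le_mul_of_nonneg_left hs h0
  have c1 : σ / 2 * (2 * α * ((1 - θ) * ⟪g, b⟫ + θ * ⟪g, a⟫)) =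
      M * θ * ((1 - θ) * ⟪g, b⟫ + θ * ⟪g, a⟫) := by rw [← hα1]; ring
  have c2 : σ / 2 * (α ^ 2 * ‖g‖ ^ 2) = (M - ξ) / 2 * ‖g‖ ^ 2 := by rw [← hα2]; ring
  linarith

/-- Theorem 2.1 (one-step contraction of C-FISTA): under assumptions (A1)-(A3)
with `τ * μ - ξ > 0` and `H ∘ B` convex, each iteration of C-FISTA contracts the
Lyapunov quantity `F(x^k) - F(x*) + ((τμ-ξ)/2)‖z^k - x*‖²` by the factor
`1 - √((τμ-ξ)(rL-ξ))/(rL)`. -/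
theorem cfista_one_step_contraction
    {n m : ℕ}
    (X : Set (EuclideanSpace ℝ (Fin n)))
    (hXclosed : IsClosed X) (hXconvex : Convex ℝ X)
    (H : EuclideanSpace ℝ (Fin m) → ℝ)
    (hHdiff : Differentiable ℝ H)
    (μ L : ℝ) (hμ : 0 < μ) (hL : 0 < L)
    -- strong convexity of H with parameter μ
    (hHsc : ∀ u v, H v ≥ H u + ⟪gradient H u, v - u⟫ + μ / 2 * ‖v - u‖ ^ 2)
    -- L-Lipschitz gradient of H
    (hHlip : ∀ u v, ‖gradient H u - gradient H v‖ ≤ L * ‖u - v‖)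
    (B : EuclideanSpace ℝ (Fin n) → EuclideanSpace ℝ (Fin m))
    (Lbar : Fin m → ℝ) (hLbar : ∀ i, 0 ≤ Lbar i)
    -- (A1): each component of B is C², convex, and Lipschitz with constant L̄ᵢ
    (hA1smooth : ∀ i, ContDiff ℝ 2 (fun x => B x i))
    (hA1convex : ∀ i, ConvexOn ℝ Set.univ (fun x => B x i))
    (hA1lip : ∀ i, ∀ x y, |B x i - B y i| ≤ Lbar i * ‖x - y‖)
    (r : ℝ) (hr : r = ∑ i, Lbar i ^ 2)
    -- (A2)
    (τ : ℝ) (hτ : 0 < τ)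
    (hA2 : ∀ x ∈ Submodule.span ℝ X, ∀ y ∈ Submodule.span ℝ X,
      τ * ‖x - y‖ ^ 2 ≤ ‖B x - B y‖ ^ 2)
    -- (A3)
    (ξ : ℝ) (hξ : 0 ≤ ξ)
    (hA3 : ∀ x' ∈ Submodule.span ℝ X, ∀ x'' ∈ Submodule.span ℝ X,
      |⟪gradient H (B x'), (fderiv ℝ B x'' - fderiv ℝ B x') (x'' - x')⟫|
        ≤ ξ * ‖x'' - x'‖ ^ 2)
    (R : EuclideanSpace ℝ (Fin n) → ℝ) (hR : ConvexOn ℝ Set.univ R)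
    (F : EuclideanSpace ℝ (Fin n) → ℝ) (hF : ∀ x, F x = H (B x) + R x)
    (hHB : ConvexOn ℝ Set.univ (fun x => H (B x)))
    (hgap : 0 < τ * μ - ξ)
    (xstar : EuclideanSpace ℝ (Fin n)) (hxstarX : xstar ∈ X)
    (hxstar : ∀ w ∈ X, F xstar ≤ F w)
    (θ α : ℝ)
    (hθ : θ = Real.sqrt ((τ * μ - ξ) * (r * L - ξ)) / (r * L))
    (hα : α = Real.sqrt ((r * L - ξ) / (τ * μ - ξ)))
    (x z y : ℕ → EuclideanSpace ℝ (Fin n))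
    (hx0 : x 0 ∈ X) (hz0 : z 0 ∈ X)
    (hy : ∀ k, y k = (1 / (1 + θ)) • x k + (θ / (1 + θ)) • z k)
    -- x^{k+1} minimizes the proximal subproblem over X
    (hxmem : ∀ k, x (k + 1) ∈ X)
    (hxmin : ∀ k, ∀ w ∈ X,
      H (B (y k)) + ⟪gradient (fun v => H (B v)) (y k), x (k + 1) - y k⟫
          + r * L / 2 * ‖x (k + 1) - y k‖ ^ 2 + R (x (k + 1))
        ≤ H (B (y k)) + ⟪gradient (fun v => H (B v)) (y k), w - y k⟫
          + r * L / 2 * ‖w - y k‖ ^ 2 + R w)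
    (hz : ∀ k, z (k + 1) = (1 - θ) • z k + θ • y k + α • (x (k + 1) - y k)) :
    ∀ k : ℕ,
      F (x (k + 1)) - F xstar + (τ * μ - ξ) / 2 * ‖z (k + 1) - xstar‖ ^ 2
        ≤ (1 - Real.sqrt ((τ * μ - ξ) * (r * L - ξ)) / (r * L))
          * (F (x k) - F xstar + (τ * μ - ξ) / 2 * ‖z k - xstar‖ ^ 2) := by
  intro k
  have hBd : Differentiable ℝ B := by
    rw [differentiable_euclidean]
    exact fun i => (hA1smooth i).differentiable (by norm_num)
  have hr0 : 0 ≤ r := by rw [hr]; positivity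
  have hBlip : ∀ u v, ‖B u - B v‖ ^ 2 ≤ r * ‖u - v‖ ^ 2 := by
    intro u v
    rw [EuclideanSpace.norm_sq_eq, hr, Finset.sum_mul]
    apply Finset.sum_le_sum
    intro i _
    rw [← mul_pow, PiLp.sub_apply, Real.norm_eq_abs]
    exact pow_le_pow_left₀ (abs_nonneg _) (hA1lip i u v) 2
  have hxX : ∀ k, x k ∈ X := fun k => by
    cases k with
    | zero => exact hx0
    | succ k => exact hxmem k
  have hsub : ∀ w ∈ X, w ∈ Submodule.span ℝ X := fun w hw => Submodule.subset_span hw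
  set S := Submodule.span ℝ X with hS
  have hyz : ∀ k, z k ∈ S → y k ∈ S := fun k h => by
    rw [hy]
    exact S.add_mem (S.smul_mem _ (hsub _ (hxX k))) (S.smul_mem _ h)
  have hzS : ∀ k, z k ∈ S := by
    intro k
    induction k with
    | zero => exact hsub _ hz0
    | succ k ih =>
      rw [hz]
      exact S.add_mem (S.add_mem (S.smul_mem _ ih) (S.smul_mem _ (hyz k ih)))
        (S.smul_mem _ (S.sub_mem (hsub _ (hxX _)) (hyz k ih)))
  have hyS : ∀ k, y k ∈ S := fun k => hyz k (hzS k)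
  by_cases htriv : ∀ w ∈ S, w = 0
  · have e1 := htriv _ (hzS k)
    have e2 := htriv _ (hzS (k + 1))
    have e3 := htriv _ (hsub _ (hxX k))
    have e4 := htriv _ (hsub _ (hxX (k + 1)))
    have e5 := htriv _ (hsub _ hxstarX)
    rw [e1, e2, e3, e4, e5]
    simp
  push Not at htriv
  obtain ⟨w0, hw0, hw0ne⟩ := htriv
  have hw0p : 0 < ‖w0 - 0‖ ^ 2 := by rw [sub_zero]; positivity
  have hA := hA2 w0 hw0 0 S.zero_mem
  have hτr : τ ≤ r := le_of_mul_le_mul_right (hA.trans (hBlip w0 0)) hw0p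
  have hBp : 0 < ‖B w0 - B 0‖ ^ 2 := lt_of_lt_of_le (by positivity) hA
  have hμL : μ ≤ L := by
    have a1 := hHsc (B w0) (B 0)
    have a2 := cf_descent H hHdiff L hHlip (B w0) (B 0)
    rw [norm_sub_rev (B 0)] at a1 a2
    have : μ * ‖B w0 - B 0‖ ^ 2 ≤ L * ‖B w0 - B 0‖ ^ 2 := by linarith
    exact le_of_mul_le_mul_right this hBp
  have hM : τ * μ ≤ r * L := mul_le_mul hτr hμL hμ.le hr0
  have hMp : 0 < r * L := by linarith
  have hgrad : ∀ u d, ⟪gradient (fun v => H (B v)) u, d⟫ = ⟪gradient H (B u), fderiv ℝ B u d⟫ := by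
    intro u d
    rw [cf_grad, cf_grad]
    have := fderiv_comp u (hHdiff (B u)) (hBd u)
    have e : (fun v => H (B v)) = H ∘ B := rfl
    rw [e, this]; rfl
  have hup : ∀ u ∈ S, ∀ v ∈ S, H (B v) ≤ H (B u) + ⟪gradient (fun v => H (B v)) u, v - u⟫
      + (r * L + ξ) / 2 * ‖v - u‖ ^ 2 := by
    intro u hu v hv
    have a1 := cf_descent H hHdiff L hHlip (B u) (B v)
    have a2 := cf_taylor B hBd S (gradient H (B u)) ξ u v hu hv
      (fun w hw => (le_abs_self _).trans (hA3 u hu w hw))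
    have a3 := mul_le_mul_of_nonneg_left (hBlip v u) hL.le
    rw [hgrad]
    linarith
  have hlow : ∀ u ∈ S, ∀ v ∈ S, H (B u) + ⟪gradient (fun v => H (B v)) u, v - u⟫
      + (τ * μ - ξ) / 2 * ‖v - u‖ ^ 2 ≤ H (B v) := by
    intro u hu v hv
    have a1 := hHsc (B u) (B v)
    have a2 := cf_taylor B hBd S (-gradient H (B u)) ξ u v hu hv
      (fun w hw => by
        rw [inner_neg_left]
        exact (neg_le_abs _).trans (hA3 u hu w hw))
    have a3 := mul_le_mul_of_nonneg_left (hA2 v hv u hu) hμ.le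
    rw [inner_neg_left, inner_neg_left] at a2
    rw [hgrad]
    linarith
  have hkey : ∀ w ∈ X, F (x (k + 1)) ≤ F w + r * L * ⟪x (k + 1) - y k, w - y k⟫
      - (r * L - ξ) / 2 * ‖x (k + 1) - y k‖ ^ 2 - (τ * μ - ξ) / 2 * ‖w - y k‖ ^ 2 := by
    intro w hw
    have b1 := hup (y k) (hyS k) (x (k + 1)) (hsub _ (hxX _))
    have b2 := hlow (y k) (hyS k) w (hsub _ hw)
    have b3 := cf_prox X hXconvex R hR (gradient (fun v => H (B v)) (y k)) (y k) (x (k + 1)) w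
      (r * L) hMp.le (hxX _) hw (fun w hw => by linarith [hxmin k w hw])
    have e : w - x (k + 1) = (w - y k) - (x (k + 1) - y k) := by abel
    rw [e, inner_sub_right _ (w - y k), inner_sub_right _ (w - y k), real_inner_self_eq_norm_sq] at b3
    rw [hF, hF]
    linarith
  have hσ := hgap
  have hMξ : 0 < r * L - ξ := by linarith
  rw [← hθ]
  set σ := τ * μ - ξ with hσd
  have hθ0 : 0 ≤ θ := by rw [hθ]; positivity
  have hθ1 : θ ≤ 1 := by
    rw [hθ, div_le_one hMp]
    apply Real.sqrt_le_iff.2 ⟨hMp.le, ?_⟩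
    rw [sq]
    exact mul_le_mul (by linarith) (by linarith) hMξ.le hMp.le
  have hα2 : σ * α ^ 2 = r * L - ξ := by
    rw [hα, Real.sq_sqrt (by positivity)]
    field_simp
  have hα1 : σ * α = r * L * θ := by
    rw [hθ, mul_div_cancel₀ _ hMp.ne']
    symm
    rw [Real.sqrt_eq_iff_mul_self_eq (by positivity) (by rw [hα]; positivity)]
    rw [← hα2]; ring
  refine cf_combine (x k) (z k) (y k) (x (k + 1)) (z (k + 1)) xstar θ α σ (r * L) ξ _ _ _ hθ0 hθ1 hσ
    hα1 hα2 (hy k) (hz k) ?_ (hkey _ hxstarX)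
  have := hkey _ (hxX k)
  have n : 0 ≤ σ / 2 * ‖x k - y k‖ ^ 2 := by positivity
  linarith
end

section
/- Under assumptions (A1)–(A3) with τμ − ξ > 0 and H∘B convex, after k iterations of C-FISTA one has F(x^k) − F(x*) ≤ (1 − √((τμ−ξ)(rL−ξ))/(rL))^k · ( F(x⁰) − F(x*) + ((τμ−ξ)/2)‖z⁰ − x*‖² ); that is, C-FISTA converges globally linearly. -/
open scoped RealInnerProductSpace

lemma aux_scalar (φ φ' : ℝ → ℝ) (c : ℝ) (h : ∀ t, HasDerivAt φ (φ' t) t)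
    (hb : ∀ t, 0 < t → t < 1 → φ' t - φ' 0 ≤ c * t) :
    φ 1 - φ 0 - φ' 0 ≤ c / 2 := by
  have hd : ∀ t, HasDerivAt (fun t => φ t - φ' 0 * t - c / 2 * t ^ 2)
      (φ' t - φ' 0 - c * t) t := by
    intro t
    have h1 := ((h t).sub ((hasDerivAt_id t).const_mul (φ' 0))).sub
      (((hasDerivAt_id t).pow 2).const_mul (c / 2))
    refine h1.congr_deriv ?_
    norm_num
    ring
  have hanti : AntitoneOn (fun t => φ t - φ' 0 * t - c / 2 * t ^ 2) (Set.Icc 0 1) := by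
    apply antitoneOn_of_deriv_nonpos (convex_Icc 0 1)
    · exact fun t _ => (hd t).continuousAt.continuousWithinAt
    · exact fun t _ => (hd t).differentiableAt.differentiableWithinAt
    · intro t ht
      rw [interior_Icc] at ht
      rw [(hd t).deriv]
      linarith [hb t ht.1 ht.2]
  have := hanti (Set.left_mem_Icc.2 zero_le_one) (Set.right_mem_Icc.2 zero_le_one) zero_le_one
  simp only at this
  linarith

lemma aux_small (A C : ℝ) (hC : 0 ≤ C) (h : ∀ t, 0 < t → t ≤ 1 → 0 ≤ A + t * C) : 0 ≤ A := by
  by_contra hA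
  push Not at hA
  have hD : 0 < C - A := by linarith
  have h1 := h (-A / (C - A)) (div_pos (by linarith) hD) ((div_le_one hD).2 (by linarith))
  have h2 : A + -A / (C - A) * C = -(A * A) / (C - A) := by field_simp; ring
  rw [h2] at h1
  have : -(A * A) / (C - A) < 0 := div_neg_of_neg_of_pos (by nlinarith) hD
  linarith

lemma aux_prox {E : Type*} [NormedAddCommGroup E] [InnerProductSpace ℝ E]
    (X : Set E) (hX : Convex ℝ X) (R : E → ℝ) (hR : ConvexOn ℝ Set.univ R)
    (c : ℝ) (hc : 0 ≤ c) (g y p w : E) (hp : p ∈ X) (hw : w ∈ X)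
    (hmin : ∀ w ∈ X, ⟪g, p - y⟫ + c / 2 * ‖p - y‖ ^ 2 + R p
      ≤ ⟪g, w - y⟫ + c / 2 * ‖w - y‖ ^ 2 + R w) :
    ⟪g, p - y⟫ + R p + c * ⟪p - y, p - w⟫ ≤ ⟪g, w - y⟫ + R w := by
  have key := aux_small (⟪g, w - p⟫ + c * ⟪p - y, w - p⟫ + R w - R p)
    (c / 2 * ‖w - p‖ ^ 2) (by positivity) (by
      intro t ht0 ht1
      have hmem : (1 - t) • p + t • w ∈ X := hX hp hw (by linarith) ht0.le (by ring)
      have h1 := hmin _ hmem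
      have h2 := hR.2 (Set.mem_univ p) (Set.mem_univ w) (by linarith : 0 ≤ 1 - t) ht0.le (by ring)
      simp only [smul_eq_mul] at h2
      have h3 : (1 - t) • p + t • w - y = (p - y) + t • (w - p) := by module
      rw [h3, norm_add_sq_real, inner_add_right, inner_smul_right, inner_smul_right, norm_smul,
        Real.norm_eq_abs, mul_pow, sq_abs] at h1
      have h4 : 0 ≤ t * (⟪g, w - p⟫ + c * ⟪p - y, w - p⟫ + R w - R p
        + t * (c / 2 * ‖w - p‖ ^ 2)) := by nlinarith
      exact nonneg_of_mul_nonneg_right h4 ht0)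
  have e1 : ⟪g, w - p⟫ = ⟪g, w - y⟫ - ⟪g, p - y⟫ := by rw [← inner_sub_right]; congr 1; abel
  have e2 : ⟪p - y, p - w⟫ = - ⟪p - y, w - p⟫ := by rw [← inner_neg_right]; congr 1; abel
  rw [e2]; linarith

lemma aux_step {E : Type*} [NormedAddCommGroup E] [InnerProductSpace ℝ E]
    (θ α a m c fx fs fp : ℝ) (x y z s p : E) (hθ0 : 0 ≤ θ) (hθ1 : θ ≤ 1) (hm : 0 ≤ m)
    (h1 : m * α = θ * c) (h2 : m * α ^ 2 = a)
    (hy : (1 + θ) • y = x + θ • z)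
    (hx : fp ≤ fx - c * ⟪p, y - x⟫ - a / 2 * ‖p‖ ^ 2)
    (hs : fp ≤ fs - m / 2 * ‖s - y‖ ^ 2 - c * ⟪p, y - s⟫ - a / 2 * ‖p‖ ^ 2) :
    fp - fs + m / 2 * ‖(1 - θ) • z + θ • y + α • p - s‖ ^ 2
      ≤ (1 - θ) * (fx - fs + m / 2 * ‖z - s‖ ^ 2) := by
  have e0 : (1 - θ) • z + θ • y + α • p - s = ((1 - θ) • (z - s) + θ • (y - s)) + α • p := by
    module
  have e1 : ‖(1 - θ) • (z - s) + θ • (y - s)‖ ^ 2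
      = (1 - θ) * ‖z - s‖ ^ 2 + θ * ‖y - s‖ ^ 2 - θ * (1 - θ) * ‖(z - s) - (y - s)‖ ^ 2 := by
    rw [norm_add_sq_real, norm_sub_sq_real (z - s) (y - s), norm_smul, norm_smul,
      Real.norm_eq_abs, Real.norm_eq_abs, mul_pow, mul_pow, sq_abs, sq_abs,
      real_inner_smul_left, real_inner_smul_right]
    ring
  have e2 : 0 ≤ θ * (1 - θ) * ‖(z - s) - (y - s)‖ ^ 2 := by
    have : 0 ≤ 1 - θ := by linarith
    positivity
  have e3 : x = (1 + θ) • y - θ • z := by rw [hy]; abel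
  have e4 : ⟪p, y - x⟫ = θ * ⟪p, z - s⟫ - θ * ⟪p, y - s⟫ := by
    rw [e3, ← inner_smul_right, ← inner_smul_right, ← inner_sub_right]; congr 1; module
  have e5 : ‖s - y‖ = ‖y - s‖ := norm_sub_rev _ _
  rw [e0, norm_add_sq_real, e1, real_inner_smul_right, inner_add_left, real_inner_smul_left,
    real_inner_smul_left, real_inner_comm, real_inner_comm p (y - s), norm_smul, mul_pow,
    Real.norm_eq_abs, sq_abs]
  rw [e4] at hx
  rw [e5] at hs
  have hx' := mul_le_mul_of_nonneg_left hx (by linarith : 0 ≤ 1 - θ)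
  have hs' := mul_le_mul_of_nonneg_left hs hθ0
  have e6 := mul_nonneg hm e2
  subst h2
  set P := ⟪p, z - s⟫
  set Q := ⟪p, y - s⟫
  have e7 : m * α * ((1 - θ) * P + θ * Q) = θ * c * ((1 - θ) * P + θ * Q) := by rw [h1]
  nlinarith

lemma aux_lin {E V : Type*} [NormedAddCommGroup E] [NormedSpace ℝ E]
    [NormedAddCommGroup V] [InnerProductSpace ℝ V] (B : E → V) (hB : Differentiable ℝ B)
    (S : Submodule ℝ E) (g : V) (y w : E) (hy : y ∈ S) (hw : w ∈ S) (ξ : ℝ)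
    (h : ∀ v ∈ S, ⟪g, (fderiv ℝ B v - fderiv ℝ B y) (v - y)⟫ ≤ ξ * ‖v - y‖ ^ 2) :
    ⟪g, B w - B y⟫ - ⟪g, fderiv ℝ B y (w - y)⟫ ≤ ξ / 2 * ‖w - y‖ ^ 2 := by
  have hd : ∀ t : ℝ, HasDerivAt (fun t : ℝ => ⟪g, B (y + t • (w - y))⟫)
      ⟪g, fderiv ℝ B (y + t • (w - y)) (w - y)⟫ t := by
    intro t
    have h1 : HasDerivAt (fun t : ℝ => y + t • (w - y)) (w - y) t := by
      simpa using ((hasDerivAt_id t).smul_const (w - y)).const_add y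
    have h2 := (hB (y + t • (w - y))).hasFDerivAt.comp_hasDerivAt t h1
    simpa using (hasDerivAt_const t g).inner ℝ h2
  have := aux_scalar _ _ (ξ * ‖w - y‖ ^ 2) hd (by
    intro t ht0 ht1
    have hv := h (y + t • (w - y)) (S.add_mem hy (S.smul_mem _ (S.sub_mem hw hy)))
    rw [add_sub_cancel_left, map_smul, inner_smul_right, norm_smul, mul_pow, Real.norm_eq_abs,
      sq_abs, _root_.sub_apply, inner_sub_right] at hv
    simp only [zero_smul, add_zero]
    refine le_of_mul_le_mul_left ?_ ht0
    nlinarith)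
  simp only [zero_smul, add_zero, one_smul, add_sub_cancel] at this
  rw [inner_sub_right]
  linarith

lemma aux_descent {V : Type*} [NormedAddCommGroup V] [InnerProductSpace ℝ V] [CompleteSpace V]
    (H : V → ℝ) (hH : Differentiable ℝ H) (L : ℝ)
    (hlip : ∀ u v, ‖gradient H u - gradient H v‖ ≤ L * ‖u - v‖) (u v : V) :
    H v ≤ H u + ⟪gradient H u, v - u⟫ + L / 2 * ‖v - u‖ ^ 2 := by
  have hd : ∀ t : ℝ, HasDerivAt (fun t : ℝ => H (u + t • (v - u)))
      ⟪gradient H (u + t • (v - u)), v - u⟫ t := by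
    intro t
    have h1 : HasDerivAt (fun t : ℝ => u + t • (v - u)) (v - u) t := by
      simpa using ((hasDerivAt_id t).smul_const (v - u)).const_add u
    have h2 := (hH (u + t • (v - u))).hasGradientAt.hasFDerivAt.comp_hasDerivAt t h1
    rw [InnerProductSpace.toDual_apply_apply] at h2
    exact h2
  have := aux_scalar _ _ (L * ‖v - u‖ ^ 2) hd (by
    intro t ht0 ht1
    simp only [zero_smul, add_zero]
    rw [← inner_sub_left]
    have h1 := hlip (u + t • (v - u)) u
    rw [add_sub_cancel_left, norm_smul, Real.norm_eq_abs, abs_of_pos ht0] at h1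
    refine (real_inner_le_norm _ _).trans ?_
    have := mul_le_mul_of_nonneg_right h1 (norm_nonneg (v - u))
    nlinarith)
  simp only [zero_smul, add_zero, one_smul, add_sub_cancel] at this
  linarith

/-- Theorem 2.1 (one-step contraction of C-FISTA): under assumptions (A1)-(A3)
with `τ * μ - ξ > 0` and `H ∘ B` convex, each iteration of C-FISTA contracts the
Lyapunov quantity `F(x^k) - F(x*) + ((τμ-ξ)/2)‖z^k - x*‖²` by the factor
`1 - √((τμ-ξ)(rL-ξ))/(rL)`. -/
theorem cfista_global_linear_convergence
    {n m : ℕ}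
    (X : Set (EuclideanSpace ℝ (Fin n)))
    (hXclosed : IsClosed X) (hXconvex : Convex ℝ X)
    (H : EuclideanSpace ℝ (Fin m) → ℝ)
    (hHdiff : Differentiable ℝ H)
    (μ L : ℝ) (hμ : 0 < μ) (hL : 0 < L)
    -- strong convexity of H with parameter μ
    (hHsc : ∀ u v, H v ≥ H u + ⟪gradient H u, v - u⟫ + μ / 2 * ‖v - u‖ ^ 2)
    -- L-Lipschitz gradient of H
    (hHlip : ∀ u v, ‖gradient H u - gradient H v‖ ≤ L * ‖u - v‖)
    (B : EuclideanSpace ℝ (Fin n) → EuclideanSpace ℝ (Fin m))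
    (Lbar : Fin m → ℝ) (hLbar : ∀ i, 0 ≤ Lbar i)
    -- (A1): each component of B is C², convex, and Lipschitz with constant L̄ᵢ
    (hA1smooth : ∀ i, ContDiff ℝ 2 (fun x => B x i))
    (hA1convex : ∀ i, ConvexOn ℝ Set.univ (fun x => B x i))
    (hA1lip : ∀ i, ∀ x y, |B x i - B y i| ≤ Lbar i * ‖x - y‖)
    (r : ℝ) (hr : r = ∑ i, Lbar i ^ 2)
    -- (A2)
    (τ : ℝ) (hτ : 0 < τ)
    (hA2 : ∀ x ∈ Submodule.span ℝ X, ∀ y ∈ Submodule.span ℝ X,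
      τ * ‖x - y‖ ^ 2 ≤ ‖B x - B y‖ ^ 2)
    -- (A3)
    (ξ : ℝ) (hξ : 0 ≤ ξ)
    (hA3 : ∀ x' ∈ Submodule.span ℝ X, ∀ x'' ∈ Submodule.span ℝ X,
      |⟪gradient H (B x'), (fderiv ℝ B x'' - fderiv ℝ B x') (x'' - x')⟫|
        ≤ ξ * ‖x'' - x'‖ ^ 2)
    (R : EuclideanSpace ℝ (Fin n) → ℝ) (hR : ConvexOn ℝ Set.univ R)
    (F : EuclideanSpace ℝ (Fin n) → ℝ) (hF : ∀ x, F x = H (B x) + R x)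
    (hHB : ConvexOn ℝ Set.univ (fun x => H (B x)))
    (hgap : 0 < τ * μ - ξ)
    (xstar : EuclideanSpace ℝ (Fin n)) (hxstarX : xstar ∈ X)
    (hxstar : ∀ w ∈ X, F xstar ≤ F w)
    (θ α : ℝ)
    (hθ : θ = Real.sqrt ((τ * μ - ξ) * (r * L - ξ)) / (r * L))
    (hα : α = Real.sqrt ((r * L - ξ) / (τ * μ - ξ)))
    (x z y : ℕ → EuclideanSpace ℝ (Fin n))
    (hx0 : x 0 ∈ X) (hz0 : z 0 ∈ X)
    (hy : ∀ k, y k = (1 / (1 + θ)) • x k + (θ / (1 + θ)) • z k)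
    -- x^{k+1} minimizes the proximal subproblem over X
    (hxmem : ∀ k, x (k + 1) ∈ X)
    (hxmin : ∀ k, ∀ w ∈ X,
      H (B (y k)) + ⟪gradient (fun v => H (B v)) (y k), x (k + 1) - y k⟫
          + r * L / 2 * ‖x (k + 1) - y k‖ ^ 2 + R (x (k + 1))
        ≤ H (B (y k)) + ⟪gradient (fun v => H (B v)) (y k), w - y k⟫
          + r * L / 2 * ‖w - y k‖ ^ 2 + R w)
    (hz : ∀ k, z (k + 1) = (1 - θ) • z k + θ • y k + α • (x (k + 1) - y k)) :
    ∀ k : ℕ,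
      F (x k) - F xstar
        ≤ (1 - Real.sqrt ((τ * μ - ξ) * (r * L - ξ)) / (r * L)) ^ k
          * (F (x 0) - F xstar + (τ * μ - ξ) / 2 * ‖z 0 - xstar‖ ^ 2) := by
  have hBd : Differentiable ℝ B := by
    rw [differentiable_euclidean]
    exact fun i => (hA1smooth i).differentiable (by norm_num)
  have hgrad : ∀ y d, ⟪gradient (fun v => H (B v)) y, d⟫
      = ⟪gradient H (B y), fderiv ℝ B y d⟫ := by
    intro y d
    have h1 : HasFDerivAt (fun v => H (B v)) ((fderiv ℝ H (B y)).comp (fderiv ℝ B y)) y :=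
      (hHdiff (B y)).hasFDerivAt.comp y (hBd y).hasFDerivAt
    simp [gradient, h1.fderiv]
  have hBlip : ∀ u v, ‖B u - B v‖ ^ 2 ≤ r * ‖u - v‖ ^ 2 := by
    intro u v
    rw [EuclideanSpace.norm_sq_eq, hr, Finset.sum_mul]
    refine Finset.sum_le_sum fun i _ => ?_
    rw [← mul_pow, PiLp.sub_apply, Real.norm_eq_abs]
    exact pow_le_pow_left₀ (abs_nonneg _) (hA1lip i u v) 2
  have hsub : ∀ w ∈ X, w ∈ Submodule.span ℝ X := fun w hw => Submodule.subset_span hw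
  have hxX : ∀ k, x k ∈ X := by
    intro k; cases k with
    | zero => exact hx0
    | succ k => exact hxmem k
  by_cases htriv : ∀ u ∈ Submodule.span ℝ X, u = 0
  · intro k
    rw [htriv _ (hsub _ (hxX k)), htriv _ (hsub _ hx0), htriv _ (hsub _ hz0),
      htriv _ (hsub _ hxstarX)]
    simp
  push Not at htriv
  obtain ⟨u, hu, hu0⟩ := htriv
  have hun : 0 < ‖u‖ ^ 2 := by positivity
  have hτr : τ * ‖u‖ ^ 2 ≤ ‖B u - B 0‖ ^ 2 := by
    simpa using hA2 u hu 0 (Submodule.zero_mem _)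
  have hbr : ‖B u - B 0‖ ^ 2 ≤ r * ‖u‖ ^ 2 := by simpa using hBlip u 0
  have hb0 : 0 < ‖B u - B 0‖ ^ 2 := lt_of_lt_of_le (by positivity) hτr
  have hτr' : τ ≤ r := le_of_mul_le_mul_right (hτr.trans hbr) hun
  have hμL : μ ≤ L := by
    have h1 := hHsc (B 0) (B u)
    have h2 := aux_descent H hHdiff L hHlip (B 0) (B u)
    have : μ * ‖B u - B 0‖ ^ 2 ≤ L * ‖B u - B 0‖ ^ 2 := by linarith
    exact le_of_mul_le_mul_right this hb0
  have hrL : τ * μ ≤ r * L := mul_le_mul hτr' hμL hμ.le (hτ.le.trans hτr')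
  have hc : 0 < r * L := by linarith
  have ha : 0 < r * L - ξ := by linarith
  have hlow : ∀ v ∈ Submodule.span ℝ X, ∀ w ∈ Submodule.span ℝ X,
      H (B v) + ⟪gradient (fun v => H (B v)) v, w - v⟫ + (τ * μ - ξ) / 2 * ‖w - v‖ ^ 2
        ≤ H (B w) := by
    intro v hv w hw
    have h1 := hHsc (B v) (B w)
    have h2 := hA2 w hw v hv
    have h3 := aux_lin B hBd (Submodule.span ℝ X) (-gradient H (B v)) v w hv hw ξ (by
      intro q hq
      rw [inner_neg_left]
      exact (neg_le_abs _).trans (hA3 v hv q hq))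
    rw [inner_neg_left, inner_neg_left] at h3
    rw [hgrad]
    nlinarith
  have hup : ∀ v ∈ Submodule.span ℝ X, ∀ w ∈ Submodule.span ℝ X,
      H (B w) ≤ H (B v) + ⟪gradient (fun v => H (B v)) v, w - v⟫
        + (r * L + ξ) / 2 * ‖w - v‖ ^ 2 := by
    intro v hv w hw
    have h1 := aux_descent H hHdiff L hHlip (B v) (B w)
    have h2 := hBlip w v
    have h3 := aux_lin B hBd (Submodule.span ℝ X) (gradient H (B v)) v w hv hw ξ (by
      intro q hq
      exact (le_abs_self _).trans (hA3 v hv q hq))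
    rw [hgrad]
    nlinarith
  have hθ0 : 0 ≤ θ := by rw [hθ]; positivity
  have hθ1 : θ ≤ 1 := by
    rw [hθ, div_le_one hc]
    apply Real.sqrt_le_iff.2 ⟨hc.le, ?_⟩
    rw [sq]
    exact mul_le_mul (by linarith) (by linarith) ha.le hc.le
  have hα2 : (τ * μ - ξ) * α ^ 2 = r * L - ξ := by
    rw [hα, Real.sq_sqrt (by positivity)]
    field_simp
  have hα1 : (τ * μ - ξ) * α = θ * (r * L) := by
    have hα0 : 0 ≤ α := by rw [hα]; positivity
    have h1 : (τ * μ - ξ) * (r * L - ξ) = ((τ * μ - ξ) * α) ^ 2 := by rw [← hα2]; ring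
    rw [hθ, div_mul_cancel₀ _ hc.ne', h1, Real.sqrt_sq (by positivity)]
  have hyS : ∀ k, z k ∈ Submodule.span ℝ X → y k ∈ Submodule.span ℝ X := by
    intro k hk
    rw [hy]
    exact Submodule.add_mem _ (Submodule.smul_mem _ _ (hsub _ (hxX k))) (Submodule.smul_mem _ _ hk)
  have hzS : ∀ k, z k ∈ Submodule.span ℝ X := by
    intro k
    induction k with
    | zero => exact hsub _ hz0
    | succ k ih =>
      rw [hz]
      exact Submodule.add_mem _ (Submodule.add_mem _ (Submodule.smul_mem _ _ ih)
        (Submodule.smul_mem _ _ (hyS k ih)))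
        (Submodule.smul_mem _ _ (Submodule.sub_mem _ (hsub _ (hxmem k)) (hyS k ih)))
  have hmain : ∀ k, ∀ w ∈ X, F (x (k + 1)) ≤ F w - (τ * μ - ξ) / 2 * ‖w - y k‖ ^ 2
      - (r * L) * ⟪x (k + 1) - y k, y k - w⟫ - (r * L - ξ) / 2 * ‖x (k + 1) - y k‖ ^ 2 := by
    intro k w hw
    have hyk := hyS k (hzS k)
    have h1 := hup (y k) hyk _ (hsub _ (hxmem k))
    have h2 := hlow (y k) hyk w (hsub _ hw)
    have h3 := aux_prox X hXconvex R hR (r * L) hc.le (gradient (fun v => H (B v)) (y k)) (y k)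
      (x (k + 1)) w (hxmem k) hw (fun w hw => by linarith [hxmin k w hw])
    have h4 : ⟪x (k + 1) - y k, x (k + 1) - w⟫
        = ‖x (k + 1) - y k‖ ^ 2 + ⟪x (k + 1) - y k, y k - w⟫ := by
      rw [← real_inner_self_eq_norm_sq, ← inner_add_right]; congr 1; abel
    rw [h4] at h3
    rw [hF, hF]
    nlinarith
  have hstep : ∀ k, F (x (k + 1)) - F xstar + (τ * μ - ξ) / 2 * ‖z (k + 1) - xstar‖ ^ 2
      ≤ (1 - θ) * (F (x k) - F xstar + (τ * μ - ξ) / 2 * ‖z k - xstar‖ ^ 2) := by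
    intro k
    rw [hz]
    apply aux_step θ α (r * L - ξ) (τ * μ - ξ) (r * L) (F (x k)) (F xstar) (F (x (k + 1)))
      (x k) (y k) (z k) xstar (x (k + 1) - y k) hθ0 hθ1 hgap.le hα1 hα2
    · have : (1 + θ) ≠ 0 := by positivity
      rw [hy, smul_add, smul_smul, smul_smul, mul_one_div_cancel this, mul_div_cancel₀ _ this,
        one_smul]
    · have h1 := hmain k (x k) (hxX k)
      have h2 : 0 ≤ (τ * μ - ξ) / 2 * ‖x k - y k‖ ^ 2 := by positivity
      linarith
    · exact hmain k xstar hxstarX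
  rw [← hθ]
  have hind : ∀ k, F (x k) - F xstar + (τ * μ - ξ) / 2 * ‖z k - xstar‖ ^ 2
      ≤ (1 - θ) ^ k * (F (x 0) - F xstar + (τ * μ - ξ) / 2 * ‖z 0 - xstar‖ ^ 2) := by
    intro k
    induction k with
    | zero => simp
    | succ k ih =>
      refine (hstep k).trans ?_
      rw [pow_succ' (1 - θ), mul_assoc]
      exact mul_le_mul_of_nonneg_left ih (by linarith)
  intro k
  have h2 : 0 ≤ (τ * μ - ξ) / 2 * ‖z k - xstar‖ ^ 2 := by positivity
  linarith [hind k]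
end

section
/- Suppose H : ℝᵐ → ℝ is differentiable with L-Lipschitz gradient, B : ℝⁿ → ℝᵐ is differentiable with each component B_i Lipschitz with constant L̄_i, r := L̄₁² + ⋯ + L̄_m², and assumption (A3) holds with constant ξ ≥ 0. Then for all y, x′ in span(X): H(B(x′)) ≤ H(B(y)) + ∇(H∘B)(y)ᵀ(x′ − y) + ((rL + ξ)/2)‖x′ − y‖². -/
open scoped RealInnerProductSpace

/-- The generalized descent inequality used in the proof of Theorem 2.1: if `H` has an
`L`-Lipschitz gradient, the components of `B` are Lipschitz with constants `L̄ᵢ`,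
`r := ∑ L̄ᵢ²`, and (A3) holds with constant `ξ ≥ 0`, then for all `y, x'` in
`span(X)`, `H(B(x')) ≤ H(B(y)) + ∇(H∘B)(y)ᵀ(x' - y) + ((rL + ξ)/2)‖x' - y‖²`. -/
theorem generalized_descent_inequality
    {n m : ℕ}
    (X : Set (EuclideanSpace ℝ (Fin n)))
    (hXclosed : IsClosed X) (hXconvex : Convex ℝ X)
    (H : EuclideanSpace ℝ (Fin m) → ℝ)
    (hHdiff : Differentiable ℝ H)
    (L : ℝ) (hL : 0 < L)
    (hHlip : ∀ u v, ‖gradient H u - gradient H v‖ ≤ L * ‖u - v‖)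
    (B : EuclideanSpace ℝ (Fin n) → EuclideanSpace ℝ (Fin m))
    (hB : Differentiable ℝ B)
    (Lbar : Fin m → ℝ) (hLbar : ∀ i, 0 ≤ Lbar i)
    (hA1lip : ∀ i, ∀ x y, |B x i - B y i| ≤ Lbar i * ‖x - y‖)
    (r : ℝ) (hr : r = ∑ i, Lbar i ^ 2)
    (ξ : ℝ) (hξ : 0 ≤ ξ)
    (hA3 : ∀ x' ∈ Submodule.span ℝ X, ∀ x'' ∈ Submodule.span ℝ X,
      |⟪gradient H (B x'), (fderiv ℝ B x'' - fderiv ℝ B x') (x'' - x')⟫|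
        ≤ ξ * ‖x'' - x'‖ ^ 2) :
    ∀ y ∈ Submodule.span ℝ X, ∀ x' ∈ Submodule.span ℝ X,
      H (B x') ≤ H (B y) + ⟪gradient (fun v => H (B v)) y, x' - y⟫
        + (r * L + ξ) / 2 * ‖x' - y‖ ^ 2 := by
  have hg : ∀ {k : ℕ} (f : EuclideanSpace ℝ (Fin k) → ℝ) (x v : EuclideanSpace ℝ (Fin k)),
      ⟪gradient f x, v⟫ = fderiv ℝ f x v := by
    intro k f x v
    simp [gradient, InnerProductSpace.toDual_symm_apply]
  have hr0 : 0 ≤ r := by rw [hr]; positivity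
  have hBl : ∀ x y, ‖B x - B y‖ ≤ Real.sqrt r * ‖x - y‖ := by
    intro x y
    rw [EuclideanSpace.norm_eq]
    apply Real.sqrt_le_iff.mpr
    refine ⟨by positivity, ?_⟩
    rw [mul_pow, Real.sq_sqrt hr0, hr, Finset.sum_mul]
    apply Finset.sum_le_sum
    intro i _
    rw [← mul_pow]
    have := hA1lip i x y
    simp only [PiLp.sub_apply, Real.norm_eq_abs]
    gcongr
  have hJ : ∀ x, ‖fderiv ℝ B x‖ ≤ Real.sqrt r := by
    intro x
    have hl : LipschitzWith (Real.toNNReal (Real.sqrt r)) B := by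
      apply LipschitzWith.of_dist_le_mul
      intro a b
      rw [dist_eq_norm, dist_eq_norm, Real.coe_toNNReal _ (Real.sqrt_nonneg _)]
      exact hBl a b
    have := norm_fderiv_le_of_lipschitz ℝ hl (x₀ := x)
    rwa [Real.coe_toNNReal _ (Real.sqrt_nonneg _)] at this
  intro y hy x' hx'
  obtain ⟨d, hd⟩ : ∃ d, d = x' - y := ⟨_, rfl⟩
  have hdm : d ∈ Submodule.span ℝ X := hd ▸ Submodule.sub_mem _ hx' hy
  have hx'd : x' = y + d := by rw [hd]; abel
  rw [← hd, hx'd]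
  have hcomp : ∀ z, HasFDerivAt (fun v => H (B v)) ((fderiv ℝ H (B z)).comp (fderiv ℝ B z)) z :=
    fun z => (hHdiff (B z)).hasFDerivAt.comp z (hB z).hasFDerivAt
  have hgy : ⟪gradient (fun v => H (B v)) y, d⟫ = ⟪gradient H (B y), fderiv ℝ B y d⟫ := by
    rw [hg, hg, (hcomp y).fderiv]; rfl
  rw [hgy]
  set c := ⟪gradient H (B y), fderiv ℝ B y d⟫ with hc
  set K := (r * L + ξ) / 2 * ‖d‖ ^ 2 with hK
  have hder : ∀ t : ℝ, HasDerivAt (fun t : ℝ => H (B (y + t • d)) - t * c - t ^ 2 * K)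
      (⟪gradient H (B (y + t • d)), fderiv ℝ B (y + t • d) d⟫ - c - 2 * t * K) t := by
    intro t
    have h1 : HasDerivAt (fun t : ℝ => y + t • d) d t := by
      simpa using ((hasDerivAt_id t).smul_const d).const_add y
    have h2 := (hcomp (y + t • d)).comp_hasDerivAt t h1
    have h3 := (h2.sub ((hasDerivAt_id t).mul_const c)).sub (((hasDerivAt_id t).pow 2).mul_const K)
    rw [hg]
    refine HasDerivAt.congr_deriv (f := fun t : ℝ => H (B (y + t • d)) - t * c - t ^ 2 * K) h3 ?_
    simp
  have hanti : AntitoneOn (fun t : ℝ => H (B (y + t • d)) - t * c - t ^ 2 * K) (Set.Icc 0 1) := by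
    apply antitoneOn_of_deriv_nonpos (convex_Icc 0 1)
    · exact fun t _ => (hder t).continuousAt.continuousWithinAt
    · exact fun t _ => (hder t).differentiableAt.differentiableWithinAt
    · intro t ht
      rw [interior_Icc] at ht
      have ht0 : 0 < t := ht.1
      rw [(hder t).deriv]
      set z := y + t • d with hz
      have hzy : z - y = t • d := by rw [hz]; abel
      have hnzy : ‖z - y‖ = t * ‖d‖ := by rw [hzy, norm_smul, Real.norm_of_nonneg ht0.le]
      have hzm : z ∈ Submodule.span ℝ X :=
        Submodule.add_mem _ hy (Submodule.smul_mem _ _ hdm)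
      have h3 := (le_abs_self _).trans (hA3 y hy z hzm)
      rw [hnzy, hzy, map_smul, inner_smul_right] at h3
      have h3' : ⟪gradient H (B y), (fderiv ℝ B z - fderiv ℝ B y) d⟫ ≤ ξ * (t * ‖d‖ ^ 2) := by
        refine le_of_mul_le_mul_left ?_ ht0
        linarith
      rw [sub_apply, inner_sub_right] at h3'
      have h4 : ⟪gradient H (B z) - gradient H (B y), fderiv ℝ B z d⟫
          ≤ (L * (Real.sqrt r * (t * ‖d‖))) * (Real.sqrt r * ‖d‖) := by
        refine (real_inner_le_norm _ _).trans ?_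
        have a1 := hHlip (B z) (B y)
        have a2 := hBl z y
        rw [hnzy] at a2
        have a3 := ((fderiv ℝ B z).le_opNorm d).trans
          (mul_le_mul_of_nonneg_right (hJ z) (norm_nonneg d))
        have a4 := a1.trans (mul_le_mul_of_nonneg_left a2 hL.le)
        exact mul_le_mul a4 a3 (norm_nonneg _) (by positivity)
      have h5 : (L * (Real.sqrt r * (t * ‖d‖))) * (Real.sqrt r * ‖d‖) = r * L * t * ‖d‖ ^ 2 := by
        have := Real.mul_self_sqrt hr0
        linear_combination L * t * ‖d‖ ^ 2 * this
      rw [h5, inner_sub_left] at h4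
      rw [hK]
      linarith
  have := hanti (Set.left_mem_Icc.mpr zero_le_one) (Set.right_mem_Icc.mpr zero_le_one) zero_le_one
  simp at this
  linarith
end

section
/- For d ∈ ℝⁿ and γ₁, γ₂ ≥ 0, define c ∈ ℝⁿ componentwise by c_i = d_i + Th_{γ₂}(−d_i), where Th_{γ₂}(t) is the clamp of t to [−γ₂, γ₂]. Then the function x ↦ (1/2)‖x − d‖² + γ₁‖x‖ + γ₂‖x‖₁ attains its minimum over ℝⁿ at x* = 0 if ‖c‖ ≤ γ₁, and at x* = ((‖c‖ − γ₁)/‖c‖) c if ‖c‖ > γ₁. -/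
/-- Closed form of the sparse-group Lasso proximal subproblem (S): with
`cᵢ = dᵢ + Th_{γ₂}(-dᵢ)`, the function `x ↦ (1/2)‖x - d‖² + γ₁‖x‖ + γ₂‖x‖₁`
attains its minimum over `ℝⁿ` at `x* = 0` if `‖c‖ ≤ γ₁` and at
`x* = ((‖c‖ - γ₁)/‖c‖) c` otherwise. -/
theorem sparse_group_lasso_prox_closed_form
    {n : ℕ} (d : EuclideanSpace ℝ (Fin n)) (γ₁ γ₂ : ℝ) (hγ₁ : 0 ≤ γ₁) (hγ₂ : 0 ≤ γ₂)
    (Th : ℝ → ℝ → ℝ)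
    (hTh : ∀ γ t, Th γ t = if t < -γ then -γ else if t ≤ γ then t else γ)
    (c : EuclideanSpace ℝ (Fin n)) (hc : ∀ i, c i = d i + Th γ₂ (-(d i)))
    (f : EuclideanSpace ℝ (Fin n) → ℝ)
    (hf : ∀ x, f x = 1 / 2 * ‖x - d‖ ^ 2 + γ₁ * ‖x‖ + γ₂ * ∑ i, |x i|)
    (xstar : EuclideanSpace ℝ (Fin n))
    (hxstar : xstar = if ‖c‖ ≤ γ₁ then 0 else ((‖c‖ - γ₁) / ‖c‖) • c) :
    ∀ x, f xstar ≤ f x := by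
  have hs : ∀ i, ∀ y : ℝ, (d i - c i) * y ≤ γ₂ * |y| := by
    intro i y
    have h : |d i - c i| ≤ γ₂ := by
      rw [hc, hTh, abs_le]
      split_ifs <;> constructor <;> linarith
    calc (d i - c i) * y ≤ |(d i - c i) * y| := le_abs_self _
      _ = |d i - c i| * |y| := abs_mul _ _
      _ ≤ γ₂ * |y| := by gcongr
  have hsc : ∀ i, (d i - c i) * c i = γ₂ * |c i| := by
    intro i
    have h := hc i
    rw [hTh] at h
    split_ifs at h with h1 h2
    · rw [abs_of_pos (by linarith), h]; ring
    · have : c i = 0 := by linarith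
      simp [this]
    · rw [abs_of_neg (by linarith), h]; ring
  have hinner : ∀ x : EuclideanSpace ℝ (Fin n),
      inner ℝ x d - inner ℝ x c = ∑ i, (d i - c i) * x i := by
    intro x
    rw [← inner_sub_right, PiLp.inner_apply]
    simp
  have hl : ∀ x : EuclideanSpace ℝ (Fin n),
      inner ℝ x d - inner ℝ x c ≤ γ₂ * ∑ i, |x i| := by
    intro x
    rw [hinner, Finset.mul_sum]
    exact Finset.sum_le_sum fun i _ => hs i (x i)
  have heq : inner ℝ c d - inner ℝ c c = γ₂ * ∑ i, |c i| := by
    rw [hinner, Finset.mul_sum]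
    exact Finset.sum_congr rfl fun i _ => hsc i
  have hlow : ∀ x, 1 / 2 * ‖x‖ ^ 2 - ‖x‖ * ‖c‖ + γ₁ * ‖x‖ + 1 / 2 * ‖d‖ ^ 2 ≤ f x := by
    intro x
    rw [hf, norm_sub_sq_real]
    have := hl x
    have := real_inner_le_norm x c
    linarith
  intro x
  refine le_trans ?_ (hlow x)
  have hx := norm_nonneg x
  split_ifs at hxstar with h
  · subst hxstar
    rw [hf]
    simp
    nlinarith [sq_nonneg ‖x‖, mul_nonneg hx (sub_nonneg.2 h)]
  · push Not at h
    have hcpos : 0 < ‖c‖ := by linarith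
    obtain ⟨t, ht⟩ : ∃ t, t = (‖c‖ - γ₁) / ‖c‖ := ⟨_, rfl⟩
    have ht0 : 0 ≤ t := by rw [ht]; exact div_nonneg (by linarith) hcpos.le
    have htc : t * ‖c‖ = ‖c‖ - γ₁ := by rw [ht]; field_simp
    rw [← ht] at hxstar
    have hsum : γ₂ * ∑ i, |xstar i| = t * (inner ℝ c d - ‖c‖ ^ 2) := by
      rw [← real_inner_self_eq_norm_sq, heq, hxstar]
      simp only [PiLp.smul_apply, smul_eq_mul, abs_mul, abs_of_nonneg ht0]
      rw [← Finset.mul_sum]; ring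
    have hn : ‖xstar‖ = ‖c‖ - γ₁ := by
      rw [hxstar, norm_smul, Real.norm_of_nonneg ht0, htc]
    have hi : inner ℝ xstar d = t * inner ℝ c d := by
      rw [hxstar, real_inner_smul_left]
    rw [hf, norm_sub_sq_real, hsum, hn, hi]
    have h2 : t * ‖c‖ ^ 2 = (‖c‖ - γ₁) * ‖c‖ := by rw [← htc]; ring
    nlinarith [sq_nonneg (‖x‖ - (‖c‖ - γ₁))]
end

section
/- For d ∈ ℝⁿ and γ₁, γ₂ ≥ 0, let c ∈ ℝⁿ be given componentwise by c_i = d_i + Th_{γ₂}(−d_i), where Th_{γ₂}(t) is the clamp of t to [−γ₂, γ₂]. Then the minimum of (1/2)‖d + y₁ + y₂‖² over all y₁, y₂ ∈ ℝⁿ with ‖y₁‖ ≤ γ₁ and ‖y₂‖_∞ ≤ γ₂ equals (1/2)·max(‖c‖ − γ₁, 0)², and it is attained with y₂* = Th_{γ₂}(−d) (applied componentwise) together with y₁* = −c if ‖c‖ ≤ γ₁ and y₁* = −γ₁ c/‖c‖ if ‖c‖ > γ₁. -/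
/-- Solution of the Fenchel dual (DS) of the sparse-group Lasso proximal
subproblem: with `cᵢ = dᵢ + Th_{γ₂}(-dᵢ)`, the minimum of `(1/2)‖d + y₁ + y₂‖²`
over `‖y₁‖ ≤ γ₁`, `‖y₂‖_∞ ≤ γ₂` equals `(1/2) max(‖c‖ - γ₁, 0)²`, attained at
`y₂* = Th_{γ₂}(-d)` (componentwise) and `y₁* = -c` if `‖c‖ ≤ γ₁`,
`y₁* = -γ₁ c/‖c‖` otherwise. -/
theorem sparse_group_lasso_dual_solution
    {n : ℕ} (d : EuclideanSpace ℝ (Fin n)) (γ₁ γ₂ : ℝ) (hγ₁ : 0 ≤ γ₁) (hγ₂ : 0 ≤ γ₂)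
    (Th : ℝ → ℝ → ℝ)
    (hTh : ∀ γ t, Th γ t = if t < -γ then -γ else if t ≤ γ then t else γ)
    (c : EuclideanSpace ℝ (Fin n)) (hc : ∀ i, c i = d i + Th γ₂ (-(d i)))
    (y₂star : EuclideanSpace ℝ (Fin n)) (hy₂star : ∀ i, y₂star i = Th γ₂ (-(d i)))
    (y₁star : EuclideanSpace ℝ (Fin n))
    (hy₁star : y₁star = if ‖c‖ ≤ γ₁ then -c else -((γ₁ / ‖c‖) • c)) :
    ‖y₁star‖ ≤ γ₁ ∧ (∀ i, |y₂star i| ≤ γ₂) ∧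
      1 / 2 * ‖d + y₁star + y₂star‖ ^ 2 = 1 / 2 * max (‖c‖ - γ₁) 0 ^ 2 ∧
      ∀ y₁ y₂ : EuclideanSpace ℝ (Fin n), ‖y₁‖ ≤ γ₁ → (∀ i, |y₂ i| ≤ γ₂) →
        1 / 2 * ‖d + y₁star + y₂star‖ ^ 2 ≤ 1 / 2 * ‖d + y₁ + y₂‖ ^ 2 := by
  have hd : d + y₂star = c := by
    ext i
    simp [hc, hy₂star]
  have hre : ∀ y y' : EuclideanSpace ℝ (Fin n), d + y + y' = (d + y') + y := fun y y' => by abel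
  have hval : ‖y₁star‖ ≤ γ₁ ∧ ‖c + y₁star‖ = max (‖c‖ - γ₁) 0 := by
    by_cases h : ‖c‖ ≤ γ₁
    · rw [if_pos h] at hy₁star
      subst hy₁star
      refine ⟨by simpa using h, ?_⟩
      rw [max_eq_right (by linarith)]
      simp
    · rw [if_neg h] at hy₁star
      subst hy₁star
      push Not at h
      have hpos : 0 < ‖c‖ := lt_of_le_of_lt hγ₁ h
      constructor
      · rw [norm_neg, norm_smul, Real.norm_eq_abs, abs_of_nonneg (by positivity)]
        rw [div_mul_cancel₀ _ hpos.ne']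
      · have e : c + -((γ₁ / ‖c‖) • c) = (1 - γ₁ / ‖c‖) • c := by
          rw [sub_smul, one_smul, sub_eq_add_neg]
        have h1 : γ₁ / ‖c‖ ≤ 1 := by rw [div_le_one hpos]; exact h.le
        rw [e, norm_smul, Real.norm_eq_abs, abs_of_nonneg (by linarith),
          max_eq_left (by linarith), sub_mul, div_mul_cancel₀ _ hpos.ne', one_mul]
  have hnorm : ‖d + y₁star + y₂star‖ = max (‖c‖ - γ₁) 0 := by
    rw [hre, hd]; exact hval.2
  refine ⟨hval.1, ?_, by rw [hnorm], ?_⟩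
  · intro i
    rw [hy₂star, hTh, abs_le]
    split_ifs <;> constructor <;> linarith
  · intro y₁ y₂ h1 h2
    rw [hnorm]
    have hle : ‖c‖ ≤ ‖d + y₂‖ := by
      rw [EuclideanSpace.norm_eq, EuclideanSpace.norm_eq]
      apply Real.sqrt_le_sqrt
      apply Finset.sum_le_sum
      intro i _
      have h3 := abs_le.1 (h2 i)
      rw [Real.norm_eq_abs, Real.norm_eq_abs, sq_abs, sq_abs, hc, hTh, PiLp.add_apply]
      split_ifs <;> nlinarith
    have h4 : ‖d + y₂‖ ≤ ‖d + y₁ + y₂‖ + ‖y₁‖ := by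
      have := norm_sub_le (d + y₁ + y₂) y₁
      rwa [show d + y₁ + y₂ - y₁ = d + y₂ by abel] at this
    have h5 : max (‖c‖ - γ₁) 0 ≤ ‖d + y₁ + y₂‖ := max_le (by linarith) (norm_nonneg _)
    have h6 : 0 ≤ max (‖c‖ - γ₁) 0 := le_max_right _ _
    gcongr
end
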